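/- Assume (G1w), (G2w) and (a1)–(a3) hold. Then for every t ∈ ⋃_m S_m with p(t) ≠ α*, the sequence of truth values of the event (t ∈ S_k and p(t) ≤ b_k) is eventually constant in k; that is, the null hypothesis at t is eventually always rejected, or eventually always accepted, by the step-k weighted Benjamini–Hochberg procedures. -/

import Mathlib

open Filter Set MeasureTheory
open scoped Classical
open scoped Topology

/-!
The step-`k` thresholds `b k` converge to `α*`, so a p-value different from `α*` is eventually on
one side of them. From below: `(a2)` provides points `r` arbitrarily close to `α*` at which `F`, the
distribution function of the p-values, is strictly above the line `r / α`; pointwise convergence of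
the empirical distribution functions keeps them above it at `r`, so that `r ≤ b k`. From above: on
`[c, 1]` with `c > α*` the function `F` is strictly below the line. As in Pólya's theorem, since the
empirical functions are monotone and `F` is right-continuous, they are below the line locally
uniformly for large `k`, hence uniformly on `[c, 1]` by compactness.
-/

section Threshold

/-- The Benjamini–Hochberg threshold at level `α` of a distribution function `F` of p-values: the
last point of `[0, 1]` at which `F` reaches the line `r ↦ r / α`. It is `α*` for the limiting
distribution function and `b k` for the empirical one. -/
noncomputable def bhThreshold (α : ℝ) (F : ℝ → ℝ) : ℝ :=
  sSup {r ∈ Icc (0 : ℝ) 1 | r / α ≤ F r}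

variable {α c r : ℝ}

lemma le_bhThreshold {F : ℝ → ℝ} (hr : r ∈ Icc (0 : ℝ) 1) (h : r / α ≤ F r) :
    r ≤ bhThreshold α F :=
  le_csSup ⟨1, fun _ hs => hs.1.2⟩ ⟨hr, h⟩

lemma bhThreshold_nonneg {F : ℝ → ℝ} : 0 ≤ bhThreshold α F :=
  Real.sSup_nonneg fun _ hr => hr.1.1

lemma bhThreshold_le {F : ℝ → ℝ} (hc : 0 ≤ c) (h : ∀ r ∈ Icc (0 : ℝ) 1, r / α ≤ F r → r ≤ c) :
    bhThreshold α F ≤ c :=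
  Real.sSup_le (fun r hr => h r hr.1 hr.2) hc

lemma lt_div_of_bhThreshold_lt {F : ℝ → ℝ} (hr : r ∈ Icc (0 : ℝ) 1) (h : bhThreshold α F < r) :
    F r < r / α := by
  contrapose! h
  exact le_bhThreshold hr h

lemma bhThreshold_le_level {F : ℝ → ℝ} (hα : 0 < α) (hF : ∀ r, F r ≤ 1) : bhThreshold α F ≤ α :=
  bhThreshold_le hα.le fun r _ h => (div_le_one hα).1 (h.trans (hF r))

variable {ι : Type*} {l : Filter ι} {G : ι → ℝ → ℝ}

lemma eventually_le_bhThreshold {F : ℝ → ℝ} (hr : r ∈ Icc (0 : ℝ) 1)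
    (hG : Tendsto (fun i => G i r) l (𝓝 (F r))) (hlt : r / α < F r) :
    ∀ᶠ i in l, r ≤ bhThreshold α (G i) :=
  (hG.eventually_const_lt hlt).mono fun _ hi => le_bhThreshold hr hi.le

variable {F : StieltjesFunction ℝ}

lemma eventually_prod_nhds_lt_div (hG_mono : ∀ i, Monotone (G i))
    (hG : ∀ r ∈ Icc (0 : ℝ) 1, Tendsto (fun i => G i r) l (𝓝 (F r)))
    (hr : r ∈ Icc (0 : ℝ) 1) (hlt : F r < r / α) :
    ∀ᶠ q : ι × ℝ in l ×ˢ 𝓝 r, q.2 ≤ 1 → G q.1 q.2 < q.2 / α := by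
  obtain ⟨z, hFz, hzr⟩ := exists_between hlt
  obtain ⟨y, hFy, hry⟩ : ∃ y, F y < z ∧ r < y :=
    ((((F.right_continuous r).mono Ioi_subset_Ici_self).eventually_lt_const hFz).and
      self_mem_nhdsWithin).exists
  have hG_lt : ∀ᶠ i in l, G i (min y 1) < z :=
    (hG _ ⟨le_min (hr.1.trans hry.le) zero_le_one, min_le_right _ _⟩).eventually_lt_const
      ((F.mono (min_le_left _ _)).trans_lt hFy)
  have hline : ∀ᶠ s in 𝓝 r, z < s / α :=
    (tendsto_id.div_const α).eventually_const_lt hzr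
  filter_upwards [hG_lt.prod_mk (hline.and (eventually_lt_nhds hry))] with ⟨i, s⟩ ⟨hi, hzs, hsy⟩ hs
  calc G i s ≤ G i (min y 1) := hG_mono i (le_min hsy.le hs)
    _ < z := hi
    _ < s / α := hzs

lemma eventually_bhThreshold_le (hG_mono : ∀ i, Monotone (G i))
    (hG : ∀ r ∈ Icc (0 : ℝ) 1, Tendsto (fun i => G i r) l (𝓝 (F r))) (hc : bhThreshold α F < c) :
    ∀ᶠ i in l, bhThreshold α (G i) ≤ c := by
  have hc₀ : 0 ≤ c := bhThreshold_nonneg.trans hc.le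
  have hlocal : ∀ r ∈ Icc c 1, ∀ᶠ q : ι × ℝ in l ×ˢ 𝓝 r, q.2 ≤ 1 → G q.1 q.2 < q.2 / α :=
    fun r hr =>
      have hr₀₁ : r ∈ Icc (0 : ℝ) 1 := ⟨hc₀.trans hr.1, hr.2⟩
      eventually_prod_nhds_lt_div hG_mono hG hr₀₁
        (lt_div_of_bhThreshold_lt hr₀₁ (hc.trans_le hr.1))
  have hunif : ∀ᶠ i in l, ∀ r ∈ Icc c 1, G i r < r / α := by
    have hprod : ∀ᶠ q : ι × ℝ in l ×ˢ 𝓝ˢ (Icc c 1), q.2 ≤ 1 → G q.1 q.2 < q.2 / α :=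
      isCompact_Icc.mem_prod_nhdsSet_of_forall hlocal
    filter_upwards [hprod.curry] with i hi r hr
    exact hi.self_of_nhdsSet r hr hr.2
  filter_upwards [hunif] with i hi
  refine bhThreshold_le hc₀ fun r hr hle => ?_
  by_contra! hcr
  exact hle.not_gt (hi r ⟨hcr.le, hr.2⟩)

theorem tendsto_bhThreshold (hG_mono : ∀ i, Monotone (G i))
    (hG : ∀ r ∈ Icc (0 : ℝ) 1, Tendsto (fun i => G i r) l (𝓝 (F r)))
    (hcross : 0 < bhThreshold α F →
      bhThreshold α F ∈ closure {r ∈ Icc (0 : ℝ) 1 | r / α < F r}) :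
    Tendsto (fun i => bhThreshold α (G i)) l (𝓝 (bhThreshold α F)) := by
  refine tendsto_order.2 ⟨fun c hc => ?_, fun c hc => ?_⟩
  · rcases lt_or_ge c 0 with hneg | hnonneg
    · exact Eventually.of_forall fun _ => hneg.trans_le bhThreshold_nonneg
    · obtain ⟨r, hcr, hr, hlt⟩ :=
        mem_closure_iff.1 (hcross (hnonneg.trans_lt hc)) (Ioi c) isOpen_Ioi hc
      exact (eventually_le_bhThreshold hr (hG r hr) hlt).mono fun _ hi => lt_of_lt_of_le hcr hi
  · obtain ⟨e, he, hec⟩ := exists_between hc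
    exact (eventually_bhThreshold_le hG_mono hG he).mono fun _ hi => hi.trans_lt hec

end Threshold

section DistributionFunctions

open ProbabilityTheory (cdf cdf_eq_real cond cond_apply cond_isProbabilityMeasure)

variable {E : Type*}

/-- The weighted empirical distribution function of the p-values `p` on the grid `S`, written `a_k`
in the paper when `S = S_k`. -/
noncomputable def weightedECDF (w p : E → ℝ) (S : Finset E) (r : ℝ) : ℝ :=
  (∑ s ∈ S with p s ≤ r, w s) / ∑ s ∈ S, w s

lemma monotone_weightedECDF {w p : E → ℝ} {S : Finset E} (hw : ∀ s ∈ S, 0 ≤ w s) :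
    Monotone (weightedECDF w p S) := fun _ _ hle =>
  div_le_div_of_nonneg_right
    (Finset.sum_le_sum_of_subset_of_nonneg
      (Finset.monotone_filter_right S fun _ _ hs => hs.trans hle)
      fun s hs _ => hw s (Finset.mem_of_mem_filter s hs))
    (Finset.sum_nonneg hw)

lemma tendsto_weightedECDF {ι : Type*} {l : Filter ι} {w p : E → ℝ} {S : ι → Finset E}
    {r x m : ℝ} (hS : ∀ i, (S i).Nonempty) (hm : m ≠ 0)
    (hx : Tendsto (fun i => (∑ s ∈ S i with p s ≤ r, w s) / (S i).card) l (𝓝 x))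
    (htotal : Tendsto (fun i => (∑ s ∈ S i, w s) / (S i).card) l (𝓝 m)) :
    Tendsto (fun i => weightedECDF w p (S i) r) l (𝓝 (x / m)) :=
  (hx.div htotal hm).congr fun i =>
    div_div_div_cancel_right₀ (Nat.cast_ne_zero.2 (hS i).card_ne_zero) _ _

variable [MeasurableSpace E] {ν : Measure E} {T : Set E} {p : E → ℝ}

/-- The normalized cumulated p-value function `a(r) / ν(T)` of the paper, the distribution function
of the p-value at a `ν`-random point of `T`. -/
noncomputable def pValueCDF (ν : Measure E) (T : Set E) (p : E → ℝ) (r : ℝ) : ℝ :=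
  ν.real {s ∈ T | p s ≤ r} / ν.real T

lemma pValueCDF_le_one [IsFiniteMeasure ν] (r : ℝ) : pValueCDF ν T p r ≤ 1 :=
  div_le_one_of_le₀ (measureReal_mono (sep_subset _ _)) measureReal_nonneg

lemma pValueCDF_eq_cdf [IsFiniteMeasure ν] (hT : MeasurableSet T) (hνT : ν T ≠ 0)
    (hp : Measurable p) : pValueCDF ν T p = cdf ((cond ν T).map p) := by
  have := cond_isProbabilityMeasure hνT
  have := Measure.isProbabilityMeasure_map (μ := cond ν T) hp.aemeasurable
  ext r
  calc pValueCDF ν T p r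
    _ = (cond ν T).real (p ⁻¹' Iic r) := by
      rw [measureReal_def, cond_apply hT, ENNReal.toReal_mul, ENNReal.toReal_inv, pValueCDF,
        div_eq_inv_mul]
      rfl
    _ = cdf ((cond ν T).map p) r := by
      rw [cdf_eq_real, map_measureReal_apply hp measurableSet_Iic]

theorem tendsto_bhThreshold_weightedECDF [IsFiniteMeasure ν] {ι : Type*} {l : Filter ι}
    {w : E → ℝ} {S : ι → Finset E} {α : ℝ}
    (hT : MeasurableSet T) (hνT : ν T ≠ 0) (hw : ∀ s ∈ T, 0 ≤ w s)
    (hp : Measurable p) (hp_le : ∀ s ∈ T, p s ≤ 1)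
    (hS_ne : ∀ i, (S i).Nonempty) (hS_sub : ∀ i, ↑(S i) ⊆ T)
    (hG1w : ∀ r ∈ Icc (0 : ℝ) 1, Tendsto (fun i => (∑ s ∈ S i with p s ≤ r, w s) / (S i).card) l
      (𝓝 (ν.real {s ∈ T | p s ≤ r})))
    (hcross : 0 < bhThreshold α (pValueCDF ν T p) →
      bhThreshold α (pValueCDF ν T p) ∈
        closure {r ∈ Icc (0 : ℝ) 1 | r / α < pValueCDF ν T p r}) :
    Tendsto (fun i => bhThreshold α (weightedECDF w p (S i))) l
      (𝓝 (bhThreshold α (pValueCDF ν T p))) := by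
  have htotal : Tendsto (fun i => (∑ s ∈ S i, w s) / (S i).card) l (𝓝 (ν.real T)) := by
    have hS_filter : ∀ i, {s ∈ S i | p s ≤ 1} = S i := fun i =>
      Finset.filter_true_of_mem fun s hs => hp_le s (hS_sub i hs)
    simpa only [hS_filter, sep_eq_self_iff_mem_true.2 hp_le] using
      hG1w 1 (right_mem_Icc.2 zero_le_one)
  have hconv : ∀ r ∈ Icc (0 : ℝ) 1,
      Tendsto (fun i => weightedECDF w p (S i) r) l (𝓝 (pValueCDF ν T p r)) := fun r hr =>
    tendsto_weightedECDF hS_ne (ENNReal.toReal_ne_zero.2 ⟨hνT, measure_ne_top ν T⟩) (hG1w r hr)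
      htotal
  have hmono : ∀ i, Monotone (weightedECDF w p (S i)) := fun i =>
    monotone_weightedECDF fun s hs => hw s (hS_sub i hs)
  rw [pValueCDF_eq_cdf hT hνT hp] at hconv hcross ⊢
  exact tendsto_bhThreshold hmono hconv hcross

end DistributionFunctions

section RestrictWithDensity

variable {E : Type*} [MeasurableSpace E] {μ : Measure E} {T : Set E} {f : E → ℝ}

lemma isFiniteMeasure_restrict_withDensity_ofReal (hμT : μ T ≠ ⊤) {C : ℝ}
    (hC : ∀ t ∈ T, f t ≤ C) :
    IsFiniteMeasure ((μ.restrict T).withDensity fun x => ENNReal.ofReal (f x)) :=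
  isFiniteMeasure_withDensity <|
    (setLIntegral_lt_top_of_le_nnreal hμT
      ⟨C.toNNReal, fun t ht => ENNReal.ofReal_le_ofReal (hC t ht)⟩).ne

lemma restrict_withDensity_ofReal_apply_ne_zero (hT : MeasurableSet T) (hμT : μ T ≠ 0)
    (hf : Measurable f) (hf_pos : ∀ t ∈ T, 0 < f t) :
    (μ.restrict T).withDensity (fun x => ENNReal.ofReal (f x)) T ≠ 0 := by
  have hac : μ.restrict T ≪ (μ.restrict T).withDensity fun x => ENNReal.ofReal (f x) :=
    withDensity_absolutelyContinuous' hf.ennreal_ofReal.aemeasurable <|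
      (ae_restrict_mem hT).mono fun t ht => (ENNReal.ofReal_pos.2 (hf_pos t ht)).ne'
  exact fun h => hμT (by simpa only [Measure.restrict_apply_self] using hac h)

end RestrictWithDensity

theorem fBH_weighted_eventually_rejected_or_accepted_general
    {E : Type*} [MeasurableSpace E] {ν : Measure E} [IsFiniteMeasure ν]
    {T : Set E} (hT : MeasurableSet T) (hνT : ν T ≠ 0)
    {f : E → ℝ} (hf : ∀ s ∈ T, 0 ≤ f s)
    {p : E → ℝ} (hp : Measurable p) (hp_le : ∀ s ∈ T, p s ≤ 1)
    {α : ℝ} (hα : 0 < α)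
    {ι : Type*} [Preorder ι] {S : ι → Finset E}
    (hS_ne : ∀ k, (S k).Nonempty) (hS_sub : ∀ k, ↑(S k) ⊆ T) (hS_mono : Monotone S)
    (hG1w : ∀ r ∈ Icc (0 : ℝ) 1,
      Tendsto (fun k => (∑ s ∈ S k with p s ≤ r, f s) / (S k).card) atTop
        (𝓝 (ν.real {s ∈ T | p s ≤ r})))
    (ha2 : bhThreshold α (pValueCDF ν T p) ∈ Ioc 0 α →
      bhThreshold α (pValueCDF ν T p) ∈
        closure {r ∈ Icc (0 : ℝ) 1 | r / α < pValueCDF ν T p r})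
    {t : E} (ht : t ∈ ⋃ m, (S m : Set E)) (hne : p t ≠ bhThreshold α (pValueCDF ν T p)) :
    (∀ᶠ k in atTop, t ∈ S k ∧ p t ≤ bhThreshold α (weightedECDF f p (S k))) ∨
      (∀ᶠ k in atTop, ¬(t ∈ S k ∧ p t ≤ bhThreshold α (weightedECDF f p (S k)))) := by
  have hlim : Tendsto (fun k => bhThreshold α (weightedECDF f p (S k))) atTop
      (𝓝 (bhThreshold α (pValueCDF ν T p))) :=
    tendsto_bhThreshold_weightedECDF hT hνT hf hp hp_le hS_ne hS_sub hG1w fun hpos =>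
      ha2 ⟨hpos, bhThreshold_le_level hα pValueCDF_le_one⟩
  obtain ⟨m, htm⟩ := mem_iUnion.1 ht
  rcases lt_or_gt_of_ne hne with hlt | hgt
  · left
    filter_upwards [hlim.eventually_const_lt hlt, eventually_ge_atTop m] with k hk hmk
    exact ⟨hS_mono hmk htm, hk.le⟩
  · right
    filter_upwards [hlim.eventually_lt_const hgt] with k hk hrej
    exact hrej.2.not_gt hk

/-- under the weighted grid approximation assumptions (G1w), (G2w) and the
regularity assumptions (a1)–(a3), for every grid point `t ∈ ⋃ m, S m` with `p t ≠ α*`, the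
event `(t ∈ S k ∧ p t ≤ b k)` is eventually constant in `k`: the null hypothesis at `t` is
eventually always rejected, or eventually always accepted, by the step-`k` weighted BH
procedures. -/
theorem fBH_weighted_eventually_rejected_or_accepted {d : ℕ}
    (T : Set (EuclideanSpace ℝ (Fin d)))
    (hT_open : IsOpen T) (hT_bdd : Bornology.IsBounded T) (hT_ne : T.Nonempty)
    (hT_norm : volume T = 1)
    -- weight function and weighted measure ν = f·μ
    (f : EuclideanSpace ℝ (Fin d) → ℝ) (hf_meas : Measurable f)
    (hf_pos : ∀ t ∈ T, 0 < f t) (hf_bdd : ∃ C : ℝ, ∀ t ∈ T, f t ≤ C)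
    (ν : Measure (EuclideanSpace ℝ (Fin d)))
    (hν : ν = (volume.restrict T).withDensity (fun x => ENNReal.ofReal (f x)))
    -- p-value function and true-null region
    (p : EuclideanSpace ℝ (Fin d) → ℝ) (hp_meas : Measurable p)
    (hp_val : ∀ t ∈ T, p t ∈ Set.Icc (0:ℝ) 1)
    (U : Set (EuclideanSpace ℝ (Fin d))) (hU_sub : U ⊆ T) (hU_meas : MeasurableSet U)
    (α : ℝ) (hα : α ∈ Set.Ioo (0:ℝ) 1)
    -- cumulated p-value function and adjusted threshold
    (a : ℝ → ℝ) (ha : ∀ r, a r = (ν {s ∈ T | p s ≤ r}).toReal)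
    (αStar : ℝ)
    (hαStar : αStar = sSup {r ∈ Set.Icc (0:ℝ) 1 | r / α ≤ a r / (ν T).toReal})
    -- nested grids and weighted empirical quantities
    (S : ℕ → Finset (EuclideanSpace ℝ (Fin d)))
    (hS_ne : ∀ k, (S k).Nonempty) (hS_sub : ∀ k, ↑(S k) ⊆ T)
    (hS_mono : ∀ k, S k ⊆ S (k + 1))
    (ak : ℕ → ℝ → ℝ)
    (hak : ∀ k r, ak k r = (∑ s ∈ (S k).filter (fun s => p s ≤ r), f s) / ∑ s ∈ S k, f s)
    (b : ℕ → ℝ) (hb : ∀ k, b k = sSup {r ∈ Set.Icc (0:ℝ) 1 | r / α ≤ ak k r})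
    -- (G1w)
    (hG1w : TendstoUniformlyOn
      (fun k r => (∑ s ∈ (S k).filter (fun s => p s ≤ r), f s) / (S k).card)
      (fun r => (ν {s ∈ T | p s ≤ r}).toReal) atTop (Set.Icc 0 1))
    -- (G2w)
    (hG2w : TendstoUniformlyOn
      (fun k r => (∑ s ∈ (S k).filter (fun s => s ∈ U ∧ p s ≤ r), f s) / (S k).card)
      (fun r => (ν (U ∩ {s | p s ≤ r})).toReal) atTop (Set.Icc 0 1))
    -- (a1)
    (ha1 : ∀ t ∈ Set.Icc (0:ℝ) 1, ν {s ∈ T | p s = t} = 0)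
    -- (a2)
    (ha2 : αStar ∈ Set.Ioc 0 α → ∀ O : Set ℝ, IsOpen O → αStar ∈ O →
      ∃ s₁ ∈ O ∩ Set.Icc (0:ℝ) 1, ∃ s₂ ∈ O ∩ Set.Icc (0:ℝ) 1,
        s₁ / α < a s₁ / (ν T).toReal ∧ a s₂ / (ν T).toReal < s₂ / α)
    -- (a3)
    (ha3 : αStar = 0 → 0 < sInf (p '' T)) :
    ∀ t ∈ ⋃ m, (S m : Set (EuclideanSpace ℝ (Fin d))), p t ≠ αStar →
      (∃ K, ∀ k ≥ K, t ∈ S k ∧ p t ≤ b k) ∨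
      (∃ K, ∀ k ≥ K, ¬(t ∈ S k ∧ p t ≤ b k)) := by
  obtain ⟨C, hC⟩ := hf_bdd
  have hT_meas : MeasurableSet T := hT_open.measurableSet
  have hν_fin : IsFiniteMeasure ν :=
    hν ▸ isFiniteMeasure_restrict_withDensity_ofReal (by simp [hT_norm]) hC
  have hνT : ν T ≠ 0 :=
    hν ▸ restrict_withDensity_ofReal_apply_ne_zero hT_meas (by simp [hT_norm]) hf_meas hf_pos
  obtain rfl : a = fun r => ν.real {s ∈ T | p s ≤ r} := funext ha
  obtain rfl : ak = fun k => weightedECDF f p (S k) := funext₂ hak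
  obtain rfl : b = fun k => bhThreshold α (weightedECDF f p (S k)) := funext hb
  obtain rfl : αStar = bhThreshold α (pValueCDF ν T p) := hαStar
  intro t ht hne
  simp only [← eventually_atTop]
  refine fBH_weighted_eventually_rejected_or_accepted_general hT_meas hνT
    (fun s hs => (hf_pos s hs).le) hp_meas (fun s hs => (hp_val s hs).2) hα.1 hS_ne hS_sub
    (monotone_nat_of_le_succ hS_mono) (fun r hr => hG1w.tendsto_at hr)
    (fun hmem => mem_closure_iff.2 fun O hO hO_mem => ?_) ht hne
  obtain ⟨r, ⟨hrO, hr⟩, -, -, hlt, -⟩ := ha2 hmem O hO hO_mem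
  exact ⟨r, hrO, hr, hlt⟩
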